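/- Let G be a finite pseudo-solvable group that is not solvable, and suppose G has no element of order 6, no element of order 10, and no element of order 15. Then for every prime r dividing |G| with r ∉ {2,3,5}, G has an element of order 2r and an element of order 3r. (Equivalently, the induced subgraph of the complement of the prime graph on {r,2,3,5} is either just the triangle {2,3,5}, or that triangle together with the single additional edge 5–r.) -/

import Mathlib

/-- A finite group is *pseudo-solvable* if it has a subnormal series whose factors are
all cyclic or isomorphic to the alternating group `A₅`. -/
def IsPseudoSolvable (G : Type*) [Group G] : Prop :=
  ∃ (n : ℕ) (H : Fin (n + 1) → Subgroup G),
    H 0 = ⊥ ∧ H (Fin.last n) = ⊤ ∧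
    ∀ i : Fin n, H i.castSucc ≤ H i.succ ∧
      ∃ hN : ((H i.castSucc).subgroupOf (H i.succ)).Normal,
        haveI := hN
        IsCyclic (H i.succ ⧸ (H i.castSucc).subgroupOf (H i.succ)) ∨
        Nonempty ((H i.succ ⧸ (H i.castSucc).subgroupOf (H i.succ)) ≃* alternatingGroup (Fin 5))

section Helpers

open Equiv

theorem a5_card : Nat.card (alternatingGroup (Fin 5)) = 60 := by
  rw [nat_card_alternatingGroup]; simp [Nat.factorial]

set_option maxRecDepth 100000 in
theorem a5_four : ∀ a : Perm (Fin 5), Perm.sign a = 1 → a ^ 4 = 1 → a ^ 2 = 1 := by decide +kernel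

set_option maxRecDepth 100000 in
theorem a5_klein_mul : ∀ a : Perm (Fin 5), (Perm.sign a = 1 ∧ a * a = 1 ∧ a 4 = 4) →
   ∀ b : Perm (Fin 5), (Perm.sign b = 1 ∧ b * b = 1 ∧ b 4 = 4) → (a * b) * (a * b) = 1 := by
  decide +kernel

/-- a three-cycle -/
def b5 : Perm (Fin 5) := swap 0 1 * swap 1 2
/-- an involution -/
def a5 : Perm (Fin 5) := swap 0 3 * swap 1 4
/-- a transposition -/
def c5 : Perm (Fin 5) := swap 3 4

set_option maxRecDepth 100000 in
theorem a5_aut_aux : ∀ a : Perm (Fin 5), Perm.sign a = 1 → a ≠ 1 → a ^ 2 = 1 → (a * b5) ^ 5 = 1 →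
    ∃ i : Fin 3, ∃ j : Fin 2,
      (b5 ^ i.val * c5 ^ j.val) * a5 * (b5 ^ i.val * c5 ^ j.val)⁻¹ = a := by decide +kernel

set_option maxRecDepth 100000 in
theorem a5_three : ∀ a : Perm (Fin 5), a ^ 3 = 1 → a ≠ 1 → ∃ s : Perm (Fin 5), s * b5 * s⁻¹ = a := by
  decide +kernel

theorem a5_subgroup_top (E : Subgroup (alternatingGroup (Fin 5))) (h : 30 ∣ Nat.card E) :
    E = ⊤ := by
  have h1 := E.card_mul_index
  rw [a5_card] at h1
  obtain ⟨k, hk⟩ := h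
  rw [hk] at h1
  have h2 : k * E.index = 2 := by nlinarith
  have h3 : E.index ∣ 2 := ⟨k, by linarith⟩
  rcases (Nat.dvd_prime Nat.prime_two).1 h3 with h | h
  · exact Subgroup.index_eq_one.1 h
  · have : E.Normal := Subgroup.normal_of_index_eq_two h
    rcases this.eq_bot_or_eq_top with h' | h'
    · rw [h', Subgroup.index_bot, a5_card] at h; omega
    · exact h'

theorem a5_aut (φ : MulAut (alternatingGroup (Fin 5))) :
    ∃ s : Perm (Fin 5), ∀ x, ((φ x : alternatingGroup (Fin 5)) : Perm (Fin 5)) = s * x * s⁻¹ := by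
  let A := alternatingGroup (Fin 5)
  let b : A := ⟨b5, by rw [Perm.mem_alternatingGroup]; decide +kernel⟩
  let a : A := ⟨a5, by rw [Perm.mem_alternatingGroup]; decide +kernel⟩
  have hb3 : b ^ 3 = 1 := Subtype.ext (by decide +kernel : b5 ^ 3 = 1)
  have hb1 : b ≠ 1 := fun h => (by decide +kernel : b5 ≠ 1) (congrArg Subtype.val h)
  have ha2 : a ^ 2 = 1 := Subtype.ext (by decide +kernel : a5 ^ 2 = 1)
  have ha1 : a ≠ 1 := fun h => (by decide +kernel : a5 ≠ 1) (congrArg Subtype.val h)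
  have hab5 : (a * b) ^ 5 = 1 := Subtype.ext (by decide +kernel : (a5 * b5) ^ 5 = 1)
  have hab1 : a * b ≠ 1 := fun h => (by decide +kernel : a5 * b5 ≠ 1) (congrArg Subtype.val h)
  obtain ⟨s, hs⟩ := a5_three (φ b : A) (by
      have := congrArg (fun x : A => ((φ x : A) : Perm (Fin 5))) hb3
      simpa using this) (by
      intro h
      apply hb1
      apply φ.injective
      rw [map_one]
      exact Subtype.ext h)
  let f : A →* Perm (Fin 5) := A.subtype.comp φ.toMonoidHom
  let g : A →* Perm (Fin 5) := (MulAut.conj s⁻¹).toMonoidHom.comp f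
  have hgi : Function.Injective g := by
    intro x y h
    have := (MulAut.conj s⁻¹).injective h
    exact φ.injective (Subtype.ext this)
  have hgb : g b = b5 := by
    change s⁻¹ * ((φ b : A) : Perm (Fin 5)) * s⁻¹⁻¹ = b5
    rw [← hs]; group
  obtain ⟨i, j, hij⟩ := a5_aut_aux (g a) (by
      have h1 : Perm.sign ((φ a : A) : Perm (Fin 5)) = 1 := Perm.mem_alternatingGroup.1 (φ a).2
      change Perm.sign (s⁻¹ * ((φ a : A) : Perm (Fin 5)) * s⁻¹⁻¹) = 1
      simp only [map_mul, map_inv, h1, mul_one, mul_inv_cancel]) (by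
      intro h
      apply ha1; apply hgi; rw [h, map_one]) (by
      rw [← map_pow, ha2, map_one]) (by
      rw [← hgb, ← map_mul, ← map_pow, hab5, map_one])
  set t := b5 ^ i.val * c5 ^ j.val with ht
  have htb : t * b5 * t⁻¹ = b5 := by
    have h1 : Commute c5 b5 := by
      change c5 * b5 = b5 * c5
      decide +kernel
    have h2 : Commute t b5 := ((Commute.refl b5).pow_left _).mul_left (h1.pow_left _)
    rw [h2.eq]; group
  let f' : A →* Perm (Fin 5) := (MulAut.conj (s * t)).toMonoidHom.comp A.subtype
  let E := f.eqLocus f'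
  have hE : ∀ x : A, x ∈ E ↔ f x = f' x := fun x => Iff.rfl
  have haE : a ∈ E := by
    rw [hE]
    change f a = (s * t) * a5 * (s * t)⁻¹
    have h0 : f a = s * g a * s⁻¹ := by
      change f a = s * (s⁻¹ * f a * s⁻¹⁻¹) * s⁻¹
      group
    rw [h0, ← hij]; group
  have hbE : b ∈ E := by
    rw [hE]
    change f b = (s * t) * b5 * (s * t)⁻¹
    have h0 : f b = s * g b * s⁻¹ := by
      change f b = s * (s⁻¹ * f b * s⁻¹⁻¹) * s⁻¹
      group
    rw [h0, hgb]
    conv_lhs => rw [← htb]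
    group
  have key : ∀ (p : ℕ) (hp : p.Prime) (x : A) (hx : x ∈ E), x ^ p = 1 → x ≠ 1 → p ∣ Nat.card E := by
    intro p hp x hx h1 h2
    have := Fact.mk hp
    have h3 := orderOf_eq_prime h1 h2
    have := Subgroup.orderOf_dvd_natCard E hx
    rwa [h3] at this
  have k2 := key 2 Nat.prime_two a haE ha2 ha1
  have k3 := key 3 Nat.prime_three b hbE hb3 hb1
  have k5 := key 5 Nat.prime_five (a * b) (E.mul_mem haE hbE) hab5 hab1
  have hT : E = ⊤ := a5_subgroup_top E
    (Nat.Coprime.mul_dvd_of_dvd_of_dvd (m := 6) (n := 5) (by norm_num)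
      (Nat.Coprime.mul_dvd_of_dvd_of_dvd (m := 2) (n := 3) (by norm_num) k2 k3) k5)
  refine ⟨s * t, fun x => ?_⟩
  exact (hE x).1 (hT ▸ Subgroup.mem_top x)

theorem exists_orderOf_of_dvd {G : Type*} [Group G] [Finite G] {n : ℕ} (g : G) (h : n ∣ orderOf g) :
    ∃ k : ℕ, orderOf (g ^ k) = n := by
  obtain ⟨k, hk⟩ := h
  have h0 := orderOf_pos g
  have hk0 : k ≠ 0 := by rintro rfl; omega
  refine ⟨k, ?_⟩
  rw [orderOf_pow_of_dvd hk0 ⟨n, by rw [hk, mul_comm]⟩, hk]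
  exact Nat.mul_div_cancel _ (Nat.pos_of_ne_zero hk0)

theorem a5_exists_order (p : ℕ) (hp : p.Prime) (h : p ∣ 60) :
    ∃ a : alternatingGroup (Fin 5), orderOf a = p := by
  have := Fact.mk hp
  exact exists_prime_orderOf_dvd_card' p (by rwa [a5_card])

theorem two_surj {H : Type*} [Group H] [Finite H] (h6 : ¬ ∃ g : H, orderOf g = 6)
    (f₁ f₂ : H →* alternatingGroup (Fin 5)) (h₁ : Function.Surjective f₁)
    (h₂ : Function.Surjective f₂) : f₂.ker ≤ f₁.ker := by
  by_contra hn
  have hN : (f₂.ker.map f₁).Normal := Subgroup.Normal.map inferInstance f₁ h₁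
  rcases hN.eq_bot_or_eq_top with h | h
  · rw [Subgroup.map_eq_bot_iff] at h
    exact hn h
  · obtain ⟨a, ha⟩ := a5_exists_order 2 Nat.prime_two (by norm_num)
    obtain ⟨b, hb⟩ := a5_exists_order 3 Nat.prime_three (by norm_num)
    obtain ⟨x, hx⟩ := h₂ b
    have : (f₁ x)⁻¹ * a ∈ f₂.ker.map f₁ := h ▸ Subgroup.mem_top _
    obtain ⟨k, hk, hk'⟩ := this
    have e1 : f₁ (x * k) = a := by rw [map_mul, hk']; group
    have e2 : f₂ (x * k) = b := by rw [map_mul, (MonoidHom.mem_ker).1 hk, hx, mul_one]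
    have d1 := orderOf_map_dvd f₁ (x * k)
    have d2 := orderOf_map_dvd f₂ (x * k)
    rw [e1, ha] at d1
    rw [e2, hb] at d2
    obtain ⟨m, hm⟩ := exists_orderOf_of_dvd (n := 6) (x * k)
      (Nat.Coprime.mul_dvd_of_dvd_of_dvd (m := 2) (n := 3) (by norm_num) d1 d2)
    exact h6 ⟨_, hm⟩

set_option maxRecDepth 100000 in
theorem a5_centralizer_aux : ∀ s : Perm (Fin 5), s * b5 = b5 * s → s * a5 = a5 * s → s = 1 := by
  decide +kernel

theorem a5_conj_unique (s t : Perm (Fin 5))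
    (h : ∀ x : alternatingGroup (Fin 5), s * x * s⁻¹ = t * (x : Perm (Fin 5)) * t⁻¹) : s = t := by
  have key : ∀ x : Perm (Fin 5), Perm.sign x = 1 → (t⁻¹ * s) * x = x * (t⁻¹ * s) := by
    intro x hx
    have := h ⟨x, Perm.mem_alternatingGroup.2 hx⟩
    simp only at this
    have h2 : s * x = t * x * t⁻¹ * s := by rw [← this]; group
    rw [mul_assoc, h2]; group
  have := a5_centralizer_aux _ (key b5 (by decide +kernel)) (key a5 (by decide +kernel))
  rw [inv_mul_eq_one] at this
  exact this.symm

theorem extend_surj {G : Type*} [Group G] [Finite G] (h6 : ¬ ∃ g : G, orderOf g = 6)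
    (H : Subgroup G) [H.Normal] (f : H →* alternatingGroup (Fin 5)) (hf : Function.Surjective f) :
    ∃ F : G →* alternatingGroup (Fin 5), Function.Surjective F := by
  have h6H : ¬ ∃ g : H, orderOf g = 6 := fun ⟨g, hg⟩ => h6 ⟨g, by rwa [Subgroup.orderOf_coe]⟩
  have ex : ∀ g : G, ∃ s : Perm (Fin 5), ∀ h : H,
      ((f (MulAut.conjNormal g h) : alternatingGroup (Fin 5)) : Perm (Fin 5)) = s * f h * s⁻¹ := by
    intro g
    let f' : H →* alternatingGroup (Fin 5) := f.comp (MulAut.conjNormal g : MulAut H).toMonoidHom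
    have hf' : Function.Surjective f' := hf.comp (MulAut.conjNormal g : MulAut H).surjective
    let φ := f.liftOfSurjective hf ⟨f', two_surj h6H f' f hf' hf⟩
    have hφ : ∀ h, φ (f h) = f' h := fun h =>
      f.liftOfRightInverse_comp_apply _ _ ⟨f', two_surj h6H f' f hf' hf⟩ h
    have hs : Function.Surjective φ := by
      intro y
      obtain ⟨x, hx⟩ := hf' y
      exact ⟨f x, by rw [hφ, hx]⟩
    obtain ⟨s, hs⟩ := a5_aut (MulEquiv.ofBijective φ ⟨Finite.injective_iff_surjective.2 hs, hs⟩)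
    refine ⟨s, fun h => ?_⟩
    rw [← hs]
    exact congrArg Subtype.val (hφ h).symm
  choose σ hσ using ex
  have huniq : ∀ (g : G) (s : Perm (Fin 5)), (∀ h : H,
      ((f (MulAut.conjNormal g h) : alternatingGroup (Fin 5)) : Perm (Fin 5)) = s * f h * s⁻¹) →
      σ g = s := by
    intro g s hs
    apply a5_conj_unique
    intro x
    obtain ⟨h, rfl⟩ := hf x
    rw [← hσ, ← hs]
  let F : G →* Perm (Fin 5) := MonoidHom.mk' σ (by
    intro a b
    apply huniq
    intro h
    rw [map_mul, MulAut.mul_apply, hσ, hσ]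
    group)
  have hFH : ∀ h : H, F h = f h := by
    intro h
    apply huniq
    intro x
    have : MulAut.conjNormal (h : G) x = h * x * h⁻¹ := Subtype.ext (by simp)
    rw [this]; simp
  have hev : ∀ g, Perm.sign (F g) = 1 := by
    intro g
    by_contra hg
    have hg' : Perm.sign (F g) = -1 := (Int.units_eq_one_or _).resolve_left hg
    let τ : Perm (Fin 5) := b5 * c5
    have hτs : Perm.sign τ = -1 := by decide +kernel
    obtain ⟨h, hh⟩ := hf ⟨(F g)⁻¹ * τ, by
      rw [Perm.mem_alternatingGroup, map_mul, map_inv, hg', hτs]; simp⟩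
    have e1 : F (g * h) = τ := by
      rw [map_mul, hFH, hh]; simp
    have d1 := orderOf_map_dvd F (g * h)
    have hτ : orderOf τ = 6 := by
      rw [orderOf_eq_iff (by norm_num)]
      decide +kernel
    rw [e1, hτ] at d1
    obtain ⟨m, hm⟩ := exists_orderOf_of_dvd (g * h) d1
    exact h6 ⟨_, hm⟩
  refine ⟨F.codRestrict _ (fun g => Perm.mem_alternatingGroup.2 (hev g)), fun y => ?_⟩
  obtain ⟨h, hh⟩ := hf y
  refine ⟨h, Subtype.ext ?_⟩
  rw [← hh]
  exact hFH h

theorem pseudo_surj {G : Type*} [Group G] [Finite G] (hG : IsPseudoSolvable G)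
    (hns : ¬ Group.IsSolvable G) (h6 : ¬ ∃ g : G, orderOf g = 6) :
    ∃ F : G →* alternatingGroup (Fin 5), Function.Surjective F := by
  obtain ⟨n, H, h0, hl, hs⟩ := hG
  have key : ∀ i : Fin (n + 1), Group.IsSolvable (H i) ∨
      ∃ F : H i →* alternatingGroup (Fin 5), Function.Surjective F := by
    intro i
    induction i using Fin.induction with
    | zero => left; rw [h0]; infer_instance
    | succ i ih =>
      obtain ⟨hle, hN, hq⟩ := hs i
      have e := Subgroup.subgroupOfEquivOfLe hle
      rcases ih with ih | ⟨F, hF⟩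
      · rcases hq with hq | ⟨⟨φ⟩⟩
        · left
          have s1 : Group.IsSolvable ((H i.castSucc).subgroupOf (H i.succ)) :=
            Group.isSolvable_of_isSolvable_injective (f := e.toMonoidHom) e.injective
          have s2 : Group.IsSolvable (H i.succ ⧸ (H i.castSucc).subgroupOf (H i.succ)) :=
            Group.isSolvable_of_comm (fun a b => by
              let _ := IsCyclic.commGroup (α := H i.succ ⧸ (H i.castSucc).subgroupOf (H i.succ))
              exact mul_comm a b)
          exact Group.isSolvable_of_ker_le_range ((H i.castSucc).subgroupOf (H i.succ)).subtype
            (QuotientGroup.mk' ((H i.castSucc).subgroupOf (H i.succ))) (by simp)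
        · right
          exact ⟨φ.toMonoidHom.comp (QuotientGroup.mk' _),
            φ.surjective.comp (QuotientGroup.mk'_surjective _)⟩
      · right
        exact extend_surj (fun ⟨g, hg⟩ => h6 ⟨g, by rwa [Subgroup.orderOf_coe]⟩)
          ((H i.castSucc).subgroupOf (H i.succ)) (F.comp e.toMonoidHom) (hF.comp e.surjective)
  have := key (Fin.last n)
  rw [hl] at this
  rcases this with h | ⟨F, hF⟩
  · exact absurd (Group.isSolvable_of_isSolvable_injective
      (f := (Subgroup.topEquiv (G := G)).symm.toMonoidHom) (Subgroup.topEquiv (G := G)).symm.injective) hns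
  · exact ⟨F.comp (Subgroup.topEquiv (G := G)).symm.toMonoidHom,
      hF.comp (Subgroup.topEquiv (G := G)).symm.surjective⟩

open scoped Pointwise in
theorem frattini_aux {G : Type*} [Group G] [Finite G] (p : ℕ) [Fact p.Prime] (L : Subgroup G) :
    ∃ Q : Subgroup G, Q ≤ L ∧ IsPGroup p Q ∧ ¬ p ∣ Q.relIndex L ∧
      ∀ t ∈ Subgroup.normalizer (L : Set G), ∃ l ∈ L,
        l * t ∈ Subgroup.normalizer (Q : Set G) := by
  obtain ⟨P⟩ := Sylow.nonempty (p := p) (G := L)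
  refine ⟨(P : Subgroup L).map L.subtype, Subgroup.map_subtype_le _, P.isPGroup'.map _, ?_, ?_⟩
  · have h := P.not_dvd_index
    rw [Subgroup.relIndex]
    have e : ((P : Subgroup L).map L.subtype).subgroupOf L = P := by
      rw [Subgroup.subgroupOf, Subgroup.comap_map_eq_self_of_injective L.subtype_injective]
    rwa [e]
  · intro t ht
    obtain ⟨l, hl⟩ := MulAction.exists_smul_eq L
      ((⟨t, ht⟩ : Subgroup.normalizer (L : Set G)) • P) P
    refine ⟨l, l.2, ?_⟩
    apply Subgroup.mem_normalizer_fintype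
    rintro _ ⟨x, hx, rfl⟩
    have h1 : (⟨t, ht⟩ : Subgroup.normalizer (L : Set G)) • x ∈
        (⟨t, ht⟩ : Subgroup.normalizer (L : Set G)) • (P : Subgroup L) :=
      Subgroup.smul_mem_pointwise_smul _ _ _ hx
    have h2 : MulAut.conj l • ((⟨t, ht⟩ : Subgroup.normalizer (L : Set G)) • x) ∈
        MulAut.conj l • ((⟨t, ht⟩ : Subgroup.normalizer (L : Set G)) • (P : Subgroup L)) :=
      Subgroup.smul_mem_pointwise_smul _ _ _ h1
    have h3 : MulAut.conj l • ((⟨t, ht⟩ : Subgroup.normalizer (L : Set G)) • (P : Subgroup L))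
        = (P : Subgroup L) := congrArg Sylow.toSubgroup hl
    rw [h3] at h2
    refine ⟨_, h2, ?_⟩
    change (l : G) * (t * x * t⁻¹) * (l : G)⁻¹ = l * t * x * (l * t)⁻¹
    group

theorem ker_V {G A : Type*} [Group G] [Finite G] [Group A] (π : G →* A)
    (hπ : Function.Surjective π) (p : ℕ) [Fact p.Prime] (hp : p ∣ Nat.card π.ker) :
    ∃ V : Subgroup G, V ≠ ⊥ ∧ IsPGroup p V ∧ (∀ a ∈ V, ∀ b ∈ V, a * b = b * a) ∧
      ∀ a, ∃ m ∈ Subgroup.normalizer (V : Set G), π m = a := by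
  obtain ⟨Q, hQL, hQp, hQi, hQ⟩ := frattini_aux p π.ker
  have hQ0 : Q ≠ ⊥ := by
    rintro rfl
    rw [Subgroup.relIndex_bot_left] at hQi
    exact hQi hp
  have : Nontrivial Q := (Subgroup.nontrivial_iff_ne_bot Q).2 hQ0
  have hc := hQp.center_nontrivial
  refine ⟨(Subgroup.center Q).map Q.subtype, ?_, ?_, ?_, ?_⟩
  · intro h
    rw [Subgroup.map_eq_bot_iff_of_injective _ Q.subtype_injective] at h
    exact (Subgroup.nontrivial_iff_ne_bot _).1 hc h
  · exact (hQp.to_subgroup _).map _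
  · rintro _ ⟨a, ha, rfl⟩ _ ⟨b, hb, rfl⟩
    have := Subgroup.mem_center_iff.1 ha b
    exact (congrArg Subtype.val this).symm
  · intro a
    obtain ⟨t, rfl⟩ := hπ a
    obtain ⟨l, hl, hlt⟩ := hQ t (by rw [Subgroup.normalizer_eq_top]; trivial)
    refine ⟨l * t, ?_, by rw [map_mul, MonoidHom.mem_ker.1 hl, one_mul]⟩
    set m := l * t
    apply Subgroup.mem_normalizer_fintype
    rintro _ ⟨v, hv, rfl⟩
    have hv' := Subgroup.mem_center_iff.1 hv
    refine ⟨⟨m * v * m⁻¹, (Subgroup.mem_normalizer_iff.1 hlt v).1 v.2⟩, ?_, rfl⟩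
    refine Subgroup.mem_center_iff.2 fun q => ?_
    have h1 := hv' ⟨m⁻¹ * q * m, (Subgroup.mem_normalizer_iff''.1 hlt q).1 q.2⟩
    have h2 : m⁻¹ * q * m * v = v * (m⁻¹ * q * m) := congrArg Subtype.val h1
    apply Subtype.ext
    change (q : G) * (m * v * m⁻¹) = m * v * m⁻¹ * q
    calc (q : G) * (m * v * m⁻¹) = m * (m⁻¹ * q * m * v) * m⁻¹ := by group
      _ = m * v * m⁻¹ * q := by rw [h2]; group

theorem exists_order_in_pgroup {G : Type*} [Group G] [Finite G] (p : ℕ) [hp : Fact p.Prime]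
    (V : Subgroup G) (hV : V ≠ ⊥) (hVp : IsPGroup p V) : ∃ z ∈ V, orderOf z = p := by
  have : Nontrivial V := (Subgroup.nontrivial_iff_ne_bot V).2 hV
  obtain ⟨n, hn, hc⟩ := hVp.nontrivial_iff_card.1 this
  obtain ⟨z, hz⟩ := exists_prime_orderOf_dvd_card' (G := V) p (hc ▸ dvd_pow_self p hn.ne')
  exact ⟨z, z.2, by rwa [Subgroup.orderOf_coe]⟩

theorem lift_order {G A : Type*} [Group G] [Finite G] [Group A] (π : G →* A) (M : Subgroup G)
    (hM : ∀ a, ∃ m ∈ M, π m = a) (n : ℕ) (a : A) (ha : orderOf a = n) :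
    ∃ m ∈ M, orderOf m = n := by
  obtain ⟨m, hm, rfl⟩ := hM a
  obtain ⟨k, hk⟩ := exists_orderOf_of_dvd (n := n) m (ha ▸ orderOf_map_dvd π m)
  exact ⟨m ^ k, M.pow_mem hm k, hk⟩

theorem core2 {G : Type*} [Group G] [Finite G] (π : G →* alternatingGroup (Fin 5))
    (hπ : Function.Surjective π) (h6 : ¬ ∃ g : G, orderOf g = 6)
    {E : Type*} [Ring E] (ρ : G →* E) (hE : (2 : E) ≠ 0)
    (hy : ∀ y, orderOf y = 2 → 1 + ρ y = 0) : False := by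
  have key : ∀ a b : G, orderOf a = 2 → orderOf b = 2 → orderOf (a * b) = 2 → False := by
    intro a b ha hb hab
    have e1 : ρ a = -1 := by have := hy a ha; exact (neg_eq_of_add_eq_zero_right this).symm
    have e2 : ρ b = -1 := by have := hy b hb; exact (neg_eq_of_add_eq_zero_right this).symm
    have e3 := hy _ hab
    rw [map_mul, e1, e2] at e3
    apply hE
    rw [← e3]; norm_num
  by_cases hk : 2 ∣ Nat.card π.ker
  · obtain ⟨V, hV0, hVp, hVc, hVs⟩ := ker_V π hπ 2 hk
    obtain ⟨z, hz, hz2⟩ := exists_order_in_pgroup 2 V hV0 hVp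
    obtain ⟨b, hb⟩ := a5_exists_order 3 Nat.prime_three (by norm_num)
    obtain ⟨m, hm, hm3⟩ := lift_order π _ hVs 3 b hb
    have hw : m * z * m⁻¹ ∈ V := (Subgroup.mem_normalizer_iff.1 hm z).1 hz
    have hw2 : orderOf (m * z * m⁻¹) = 2 := by
      rw [← hz2]; exact orderOf_injective (MulAut.conj m).toMonoidHom (MulAut.conj m).injective z
    have hc : Commute z m := by
      by_contra hn
      apply key z (m * z * m⁻¹) hz2 hw2
      apply orderOf_eq_prime
      · rw [(show Commute z (m * z * m⁻¹) from hVc _ hz _ hw).mul_pow]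
        rw [← hw2, pow_orderOf_eq_one, hw2, ← hz2, pow_orderOf_eq_one, one_mul]
      · intro h
        apply hn
        have hzi : z⁻¹ = z := by
          rw [inv_eq_iff_mul_eq_one, ← sq, ← hz2, pow_orderOf_eq_one]
        have h' : m * z * m⁻¹ = z := by rw [← hzi]; rw [hzi]; exact (eq_inv_of_mul_eq_one_right h).trans hzi
        change z * m = m * z
        conv_lhs => rw [← h']
        group
    apply h6
    refine ⟨z * m, ?_⟩
    rw [hc.orderOf_mul_eq_mul_orderOf_of_coprime (by rw [hz2, hm3]; norm_num), hz2, hm3]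
  · have hcard : Nat.card G = 60 * Nat.card π.ker := by
      rw [← Subgroup.card_mul_index π.ker, Subgroup.index_ker, MonoidHom.range_eq_top.2 hπ,
        Subgroup.card_top, a5_card, mul_comm]
    obtain ⟨K, hK⟩ := Sylow.exists_subgroup_card_pow_prime (G := G) 2 (n := 2)
      (by rw [hcard]; exact Dvd.dvd.mul_right (by norm_num) _)
    have hsq : ∀ g ∈ K, g ^ 2 = 1 := by
      intro g hg
      have h4 : g ^ 4 = 1 := by
        have := Subgroup.orderOf_dvd_natCard K hg
        rw [hK] at this
        exact orderOf_dvd_iff_pow_eq_one.1 this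
      have h2 : π (g ^ 2) = 1 := by
        apply Subtype.ext
        have := a5_four (π g) (Perm.mem_alternatingGroup.1 (π g).2) (by
          have := congrArg (fun x => ((π x : alternatingGroup (Fin 5)) : Perm (Fin 5))) h4
          simpa using this)
        simpa using this
      by_contra hn
      apply hk
      have ho : orderOf (g ^ 2) = 2 := orderOf_eq_prime (by rw [← pow_mul]; exact h4) hn
      rw [← ho]
      exact Subgroup.orderOf_dvd_natCard _ (MonoidHom.mem_ker.2 h2)
    have hord : ∀ g ∈ K, g ≠ 1 → orderOf g = 2 := fun g hg h1 => orderOf_eq_prime (hsq g hg) h1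
    have : ∃ a ∈ K, a ≠ 1 := by
      by_contra! hn
      have : K = ⊥ := (Subgroup.eq_bot_iff_forall K).2 hn
      rw [this, Subgroup.card_bot] at hK
      norm_num at hK
    obtain ⟨a, ha, ha1⟩ := this
    have : ∃ b ∈ K, b ≠ 1 ∧ b ≠ a := by
      by_contra! hn
      have hsub : (K : Set G) ⊆ {1, a} := by
        intro b hb
        by_cases h : b = 1
        · left; exact h
        · right; exact hn b hb h
      have h1 := Set.ncard_le_ncard hsub (Set.toFinite _)
      have h2 : ({1, a} : Set G).ncard ≤ 2 := by
        have := Set.ncard_insert_le 1 {a}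
        rwa [Set.ncard_singleton] at this
      have h3 : (K : Set G).ncard = 2 ^ 2 := hK
      omega
    obtain ⟨b, hb, hb1, hba⟩ := this
    refine key a b (hord a ha ha1) (hord b hb hb1) (hord _ (K.mul_mem ha hb) ?_)
    intro h
    apply hba
    have h1 : b = a⁻¹ := eq_inv_of_mul_eq_one_right h
    rw [h1, inv_eq_iff_mul_eq_one, ← sq, hsq a ha]


/-- The Klein four-group on the first four letters. -/
def kleinD : Subgroup (alternatingGroup (Fin 5)) where
  carrier := {a | (a : Perm (Fin 5)) * a = 1 ∧ (a : Perm (Fin 5)) 4 = 4}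
  one_mem' := by simp
  mul_mem' := by
    rintro a b ⟨ha, ha4⟩ ⟨hb, hb4⟩
    refine ⟨a5_klein_mul a ⟨Perm.mem_alternatingGroup.1 a.2, ha, ha4⟩ b
      ⟨Perm.mem_alternatingGroup.1 b.2, hb, hb4⟩, ?_⟩
    change (a : Perm (Fin 5)) ((b : Perm (Fin 5)) 4) = 4
    rw [hb4, ha4]
  inv_mem' := by
    rintro a ⟨ha, ha4⟩
    have : a⁻¹ = a := inv_eq_iff_mul_eq_one.2 (Subtype.ext ha)
    rw [this]
    exact ⟨ha, ha4⟩

theorem mem_kleinD (a : alternatingGroup (Fin 5)) :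
    a ∈ kleinD ↔ (a : Perm (Fin 5)) * a = 1 ∧ (a : Perm (Fin 5)) 4 = 4 := Iff.rfl

theorem kleinD_two : 2 ∣ Nat.card kleinD := by
  let a : alternatingGroup (Fin 5) := ⟨swap 0 1 * swap 2 3, by
    rw [Perm.mem_alternatingGroup]; decide +kernel⟩
  have ha : a ∈ kleinD := by
    rw [mem_kleinD]; change (swap 0 1 * swap 2 3 : Perm (Fin 5)) * (swap 0 1 * swap 2 3) = 1 ∧ _
    decide +kernel
  have h2 : orderOf a = 2 := orderOf_eq_prime (by rw [sq]; exact Subtype.ext ha.1) (fun h => by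
    have := congrArg Subtype.val h
    exact (by decide +kernel : (swap 0 1 * swap 2 3 : Perm (Fin 5)) ≠ 1) this)
  rw [← h2]
  exact Subgroup.orderOf_dvd_natCard _ ha

set_option maxRecDepth 100000 in
set_option synthInstance.maxSize 1000 in
set_option synthInstance.maxHeartbeats 400000 in
theorem a5_klein_coset : ∀ u : Perm (Fin 5), (Perm.sign u = 1 ∧ u * u = 1 ∧ u 4 = 4) →
    ∀ v : Perm (Fin 5), (Perm.sign v = 1 ∧ v 4 = 4 ∧ v ^ 3 = 1 ∧ v ≠ 1) →
      (u * v) ^ 3 = 1 ∧ u * v ≠ 1 := by decide +kernel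

theorem klein_conj (b x : alternatingGroup (Fin 5)) (hb : (b : Perm (Fin 5)) 4 = 4)
    (hx : x ∈ kleinD) : b * x * b⁻¹ ∈ kleinD := by
  obtain ⟨h1, h2⟩ := hx
  have h1' : x * x = 1 := Subtype.ext h1
  have hb' : (b : Perm (Fin 5))⁻¹ 4 = 4 := by
    rw [Perm.inv_eq_iff_eq, hb]
  refine ⟨?_, ?_⟩
  · have : b * x * b⁻¹ * (b * x * b⁻¹) = 1 := by
      calc b * x * b⁻¹ * (b * x * b⁻¹) = b * (x * x) * b⁻¹ := by group
        _ = 1 := by rw [h1']; group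
    exact congrArg Subtype.val this
  · change (b : Perm (Fin 5)) ((x : Perm (Fin 5)) ((b : Perm (Fin 5))⁻¹ 4)) = 4
    rw [hb', h2, hb]

theorem core3_alg {E : Type*} [Ring E] (s t : E) (hst : s * t = t * s)
    (h1 : 1 + s + s ^ 2 = 0) (h2 : 1 + t + t ^ 2 = 0) (h3 : 1 + s * t + (s * t) ^ 2 = 0)
    (h4 : 1 + s * t ^ 2 + (s * t ^ 2) ^ 2 = 0) (ht : t ^ 3 = 1) : (3 : E) = 0 := by
  have hs2 : s ^ 2 = -1 - s := by
    have : s ^ 2 = (1 + s + s ^ 2) - 1 - s := by abel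
    rw [this, h1]; abel
  have ht2 : t ^ 2 = -1 - t := by
    have : t ^ 2 = (1 + t + t ^ 2) - 1 - t := by abel
    rw [this, h2]; abel
  have c : Commute s t := hst
  rw [c.mul_pow, hs2, ht2] at h3
  have t4 : (t ^ 2) ^ 2 = t := by rw [← pow_mul, show 2 * 2 = 3 + 1 from rfl, pow_succ, ht, one_mul]
  rw [(c.pow_right 2).mul_pow, t4, hs2, ht2] at h4
  have : (3 : E) = (1 + s * t + (-1 - s) * (-1 - t)) + (1 + s * (-1 - t) + (-1 - s) * t) := by
    have h0 : (3 : E) = 3 • 1 := by norm_num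
    rw [h0]
    noncomm_ring
  rw [this, h3, h4, add_zero]

theorem core3 {G : Type*} [Group G] [Finite G] (π : G →* alternatingGroup (Fin 5))
    (hπ : Function.Surjective π) (h6 : ¬ ∃ g : G, orderOf g = 6) (h15 : ¬ ∃ g : G, orderOf g = 15)
    {E : Type*} [Ring E] (ρ : G →* E) (hE : (3 : E) ≠ 0) (hE2 : ∀ x : E, 2 * x = 0 → x = 0)
    (hy : ∀ y, orderOf y = 3 → 1 + ρ y + ρ y ^ 2 = 0) : False := by
  by_cases hk : 3 ∣ Nat.card π.ker
  · have : Fact (Nat.Prime 3) := ⟨Nat.prime_three⟩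
    obtain ⟨V, hV0, hVp, hVc, hVs⟩ := ker_V π hπ 3 hk
    obtain ⟨z, hz, hz3⟩ := exists_order_in_pgroup 3 V hV0 hVp
    obtain ⟨b, hb⟩ := a5_exists_order 5 Nat.prime_five (by norm_num)
    obtain ⟨m, hm, hm5⟩ := lift_order π _ hVs 5 b hb
    have hz31 : z ^ 3 = 1 := by rw [← hz3, pow_orderOf_eq_one]
    have hw : m * z * m⁻¹ ∈ V := (Subgroup.mem_normalizer_iff.1 hm z).1 hz
    have hw3 : orderOf (m * z * m⁻¹) = 3 := by
      rw [← hz3]; exact orderOf_injective (MulAut.conj m).toMonoidHom (MulAut.conj m).injective z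
    have hor : m * z * m⁻¹ = z ∨ m * z * m⁻¹ = z⁻¹ := by
      by_contra! hn
      obtain ⟨hn1, hn2⟩ := hn
      set w := m * z * m⁻¹ with hwdef
      have hw31 : w ^ 3 = 1 := by rw [← hw3, pow_orderOf_eq_one]
      have hc : Commute z w := hVc _ hz _ hw
      have o1 : orderOf (z * w) = 3 := by
        apply orderOf_eq_prime
        · rw [hc.mul_pow, hz31, hw31, one_mul]
        · intro h; exact hn2 (eq_inv_of_mul_eq_one_right h)
      have o2 : orderOf (z * w ^ 2) = 3 := by
        apply orderOf_eq_prime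
        · rw [(hc.pow_right 2).mul_pow, hz31, ← pow_mul, mul_comm, pow_mul, hw31, one_mul, one_pow]
        · intro h
          apply hn1
          calc w = (z * w ^ 2) * w := by rw [h, one_mul]
            _ = z * w ^ 3 := by rw [mul_assoc, ← pow_succ]
            _ = z := by rw [hw31, mul_one]
      have e3 := hy _ o1
      have e4 := hy _ o2
      rw [map_mul] at e3
      rw [map_mul, map_pow] at e4
      exact hE (core3_alg (ρ z) (ρ w) (by rw [← map_mul, hc.eq, map_mul]) (hy z hz3) (hy w hw3) e3 e4
        (by rw [← map_pow, hw31, map_one]))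
    have hc : Commute z (m ^ 2) := by
      have : m ^ 2 * z * (m ^ 2)⁻¹ = z := by
        have e : m ^ 2 * z * (m ^ 2)⁻¹ = m * (m * z * m⁻¹) * m⁻¹ := by rw [sq]; group
        rw [e]
        rcases hor with h | h
        · rw [h, h]
        · rw [h]
          have : m * z⁻¹ * m⁻¹ = (m * z * m⁻¹)⁻¹ := by group
          rw [this, h, inv_inv]
      change z * m ^ 2 = m ^ 2 * z
      conv_lhs => rw [← this]
      group
    have hm2 : orderOf (m ^ 2) = 5 := by
      rw [orderOf_pow, hm5]; norm_num
    apply h15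
    refine ⟨z * m ^ 2, ?_⟩
    rw [hc.orderOf_mul_eq_mul_orderOf_of_coprime (by rw [hz3, hm2]; norm_num), hz3, hm2]
  · have : Fact (Nat.Prime 3) := ⟨Nat.prime_three⟩
    let b : alternatingGroup (Fin 5) := ⟨b5, by rw [Perm.mem_alternatingGroup]; decide +kernel⟩
    have hb4 : (b : Perm (Fin 5)) 4 = 4 := by change b5 4 = 4; decide +kernel
    obtain ⟨t, ht⟩ := hπ b
    obtain ⟨Q, hQL, hQp, hQi, hQ⟩ := frattini_aux 2 (kleinD.comap π)
    obtain ⟨l, hl, hx0⟩ := hQ t (by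
      apply Subgroup.mem_normalizer_fintype
      intro n hn
      change π (t * n * t⁻¹) ∈ kleinD
      rw [map_mul, map_mul, map_inv, ht]
      exact klein_conj b _ hb4 hn)
    have hsgn : ∀ g : G, Perm.sign ((π g : alternatingGroup (Fin 5)) : Perm (Fin 5)) = 1 :=
      fun g => Perm.mem_alternatingGroup.1 (π g).2
    have hl' : π l ∈ kleinD := hl
    have hπx0 : ((π (l * t) : alternatingGroup (Fin 5)) : Perm (Fin 5)) = π l * b := by
      rw [map_mul, ht]; rfl
    have hcos := a5_klein_coset (π l) ⟨hsgn l, hl'.1, hl'.2⟩ b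
      ⟨Perm.mem_alternatingGroup.1 b.2, hb4, by change b5 ^ 3 = 1; decide +kernel, by
        change b5 ≠ 1; decide +kernel⟩
    have hd3 : 3 ∣ orderOf (l * t) := by
      have h1 : orderOf (π (l * t)) = 3 := by
        apply orderOf_eq_prime
        · apply Subtype.ext
          change ((π (l * t) : alternatingGroup (Fin 5)) : Perm (Fin 5)) ^ 3 = 1
          rw [hπx0]; exact hcos.1
        · intro h
          apply hcos.2
          rw [← hπx0, h]; rfl
      rw [← h1]; exact orderOf_map_dvd π _
    obtain ⟨k, hk3⟩ := exists_orderOf_of_dvd _ hd3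
    have hxN := Subgroup.pow_mem _ hx0 k
    have hx4 : ((π ((l * t) ^ k) : alternatingGroup (Fin 5)) : Perm (Fin 5)) 4 = 4 := by
      rw [map_pow]
      change (((π (l * t) : alternatingGroup (Fin 5)) : Perm (Fin 5)) ^ k) 4 = 4
      apply Perm.pow_apply_eq_self_of_apply_eq_self
      rw [hπx0]
      change ((π l : alternatingGroup (Fin 5)) : Perm (Fin 5)) ((b : Perm (Fin 5)) 4) = 4
      rw [hb4, hl'.2]
    generalize (l * t) ^ k = x at hk3 hxN hx4
    have hx31 : x ^ 3 = 1 := by rw [← hk3, pow_orderOf_eq_one]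
    have hx1 : π x ≠ 1 := by
      intro h
      apply hk
      rw [← hk3]
      exact Subgroup.orderOf_dvd_natCard _ (MonoidHom.mem_ker.2 h)
    have hxc : ∀ g ∈ Q, x * g * x⁻¹ ∈ Q := fun g hg => (Subgroup.mem_normalizer_iff.1 hxN g).1 hg
    have hord : ∀ g ∈ Q, orderOf (g * x) = 3 := by
      intro g hg
      have hgD : π g ∈ kleinD := hQL hg
      have hc := a5_klein_coset (π g) ⟨hsgn g, hgD.1, hgD.2⟩ (π x) ⟨hsgn x, hx4, by
          have := congrArg (fun y => ((π y : alternatingGroup (Fin 5)) : Perm (Fin 5))) hx31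
          simpa using this, fun h => hx1 (Subtype.ext h)⟩
      have h3 : 3 ∣ orderOf (g * x) := by
        have h1 : orderOf (π (g * x)) = 3 := by
          apply orderOf_eq_prime
          · apply Subtype.ext
            rw [map_mul]; exact hc.1
          · intro h
            apply hc.2
            rw [map_mul] at h
            exact congrArg Subtype.val h
        rw [← h1]; exact orderOf_map_dvd π _
      have hcube : (g * x) ^ 3 ∈ Q := by
        have e : (g * x) ^ 3 = g * (x * g * x⁻¹) * (x * (x * g * x⁻¹) * x⁻¹) * x ^ 3 := by
          simp only [pow_succ, pow_zero]; group
        rw [e, hx31, mul_one]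
        exact Q.mul_mem (Q.mul_mem hg (hxc g hg)) (hxc _ (hxc g hg))
      by_contra hne
      have hne1 : (g * x) ^ 3 ≠ 1 := by
        intro h
        exact hne (Nat.dvd_antisymm (orderOf_dvd_of_pow_eq_one h) h3)
      obtain ⟨j, hj⟩ := (IsPGroup.iff_orderOf.1 hQp) ⟨_, hcube⟩
      rw [Subgroup.orderOf_mk] at hj
      have hj0 : j ≠ 0 := by
        rintro rfl
        rw [pow_zero, orderOf_eq_one_iff] at hj
        exact hne1 hj
      have h2 : 2 ∣ orderOf (g * x) :=
        (dvd_pow_self 2 hj0).trans (hj ▸ orderOf_pow_dvd 3)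
      obtain ⟨m, hm⟩ := exists_orderOf_of_dvd (n := 6) (g * x)
        (Nat.Coprime.mul_dvd_of_dvd_of_dvd (m := 2) (n := 3) (by norm_num) h2 h3)
      exact h6 ⟨_, hm⟩
    have := Fintype.ofFinite Q
    set S : E := ∑ g : Q, ρ g with hS
    have hSl : ∀ h : Q, ρ h * S = S := by
      intro h
      rw [hS, Finset.mul_sum]
      exact Fintype.sum_equiv (Equiv.mulLeft h) _ _ (fun g => by simp)
    have hsum : (Fintype.card Q : E) + S * ρ x + ρ x⁻¹ * S = 0 := by
      have h1 : ∑ g : Q, (1 + ρ (g * x) + ρ (g * x) ^ 2) = 0 :=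
        Finset.sum_eq_zero fun g _ => hy _ (hord g g.2)
      rw [Finset.sum_add_distrib, Finset.sum_add_distrib] at h1
      rw [← h1]
      congr 1
      · congr 1
        · simp
        · rw [hS, Finset.sum_mul]; simp
      · rw [hS, Finset.mul_sum]
        refine Fintype.sum_equiv (Equiv.inv Q) _ _ (fun g => ?_)
        rw [← map_mul, ← map_pow]
        congr 1
        have h3 : ((g⁻¹ : Q) * x : G) ^ 3 = 1 := by
          rw [← hord _ (g⁻¹).2, pow_orderOf_eq_one]
        have : ((g⁻¹ : Q) * x : G) ^ 2 = ((g⁻¹ : Q) * x : G)⁻¹ := by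
          rw [eq_inv_iff_mul_eq_one, ← pow_succ]; exact h3
        change x⁻¹ * (g : G) = ((g⁻¹ : Q) * x : G) ^ 2
        rw [this]; simp
    have hpow : ∀ (n : ℕ) (y : E), (2 : E) ^ n * y = 0 → y = 0 := by
      intro n
      induction n with
      | zero => intro y h; simpa using h
      | succ n ih =>
        intro y h
        rw [pow_succ, mul_assoc] at h
        exact hE2 _ (ih _ h)
    have htriv : ∀ h : Q, ρ h = 1 := by
      intro h
      have h1 : ρ h * ((Fintype.card Q : E) + S * ρ x + ρ x⁻¹ * S) = 0 := by rw [hsum, mul_zero]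
      have h2 : ρ h * (ρ x⁻¹ * S) = ρ x⁻¹ * S := by
        have e : (h : G) * x⁻¹ = x⁻¹ * (x * h * x⁻¹) := by group
        rw [← mul_assoc, ← map_mul, e, map_mul, mul_assoc, hSl ⟨_, hxc h h.2⟩]
      rw [mul_add, mul_add, ← mul_assoc, hSl, h2] at h1
      have h3 : (Fintype.card Q : E) * (ρ h - 1) = 0 := by
        have : (Fintype.card Q : E) * (ρ h - 1) = (ρ h * (Fintype.card Q : E) + S * ρ x + ρ x⁻¹ * S)
            - ((Fintype.card Q : E) + S * ρ x + ρ x⁻¹ * S) := by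
          rw [(Nat.cast_commute (Fintype.card Q) (ρ h)).symm.eq, mul_sub, mul_one]; abel
        rw [this, h1, hsum, sub_zero]
      obtain ⟨n, hn⟩ := IsPGroup.iff_card.1 hQp
      rw [Nat.card_eq_fintype_card] at hn
      rw [hn] at h3
      push_cast at h3
      exact sub_eq_zero.1 (hpow n _ h3)
    have hQker : ¬ Q ≤ π.ker := by
      intro hle
      apply hQi
      have h1 : π.ker.relIndex (kleinD.comap π) ∣ Q.relIndex (kleinD.comap π) :=
        Subgroup.relIndex_dvd_of_le_left _ hle
      rw [Subgroup.relIndex_ker, Subgroup.map_comap_eq_self_of_surjective hπ] at h1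
      exact kleinD_two.trans h1
    have hN : (ρ.ker.map π).Normal := Subgroup.Normal.map inferInstance π hπ
    rcases hN.eq_bot_or_eq_top with h | h
    · rw [Subgroup.map_eq_bot_iff] at h
      exact hQker fun g hg => h (MonoidHom.mem_ker.2 (htriv ⟨g, hg⟩))
    · obtain ⟨a, ha⟩ := a5_exists_order 3 Nat.prime_three (by norm_num)
      obtain ⟨c, hc, hc3⟩ := lift_order π ρ.ker (fun a => by
        have : a ∈ ρ.ker.map π := h ▸ Subgroup.mem_top a
        exact this) 3 a ha
      have := hy c hc3
      rw [MonoidHom.mem_ker.1 hc] at this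
      apply hE
      rw [← this]; norm_num

theorem pgroup_coprime {V : Type*} [Group V] (r : ℕ) (hr : r.Prime) (hV : IsPGroup r V) (n : ℕ)
    (hn : n.Coprime r) (u : V) (h : u ^ n = 1) : u = 1 := by
  have := Fact.mk hr
  obtain ⟨k, hk⟩ := IsPGroup.iff_orderOf.1 hV u
  have h1 := orderOf_dvd_of_pow_eq_one h
  rw [hk] at h1
  have h2 : (r ^ k) = 1 := Nat.eq_one_of_dvd_coprimes (hn.pow_right k) h1 dvd_rfl
  rw [h2] at hk
  exact orderOf_eq_one_iff.1 hk

theorem fpf {G : Type*} [Group G] [Finite G] (p r : ℕ) (hr : r.Prime)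
    (hpr : p.Coprime r) (hno : ¬ ∃ g : G, orderOf g = p * r) (V : Subgroup G) (hV : IsPGroup r V)
    (y : G) (hy : orderOf y = p) (v : G) (hv : v ∈ V) (h : y * v * y⁻¹ = v) : v = 1 := by
  have := Fact.mk hr
  by_contra hv1
  obtain ⟨k, hk⟩ := IsPGroup.iff_orderOf.1 hV ⟨v, hv⟩
  rw [Subgroup.orderOf_mk] at hk
  have hk0 : k ≠ 0 := by
    rintro rfl
    rw [pow_zero, orderOf_eq_one_iff] at hk
    exact hv1 hk
  obtain ⟨j, hj⟩ := exists_orderOf_of_dvd (n := r) v (hk ▸ dvd_pow_self r hk0)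
  have hc : Commute y v := by
    change y * v = v * y
    conv_rhs => rw [← h]
    group
  apply hno
  refine ⟨y * v ^ j, ?_⟩
  rw [(hc.pow_right j).orderOf_mul_eq_mul_orderOf_of_coprime (by rwa [hy, hj]), hy, hj]

theorem final_aux {G : Type*} [Group G] [Finite G] (π : G →* alternatingGroup (Fin 5))
    (hπ : Function.Surjective π) (h6 : ¬ ∃ g : G, orderOf g = 6) (h15 : ¬ ∃ g : G, orderOf g = 15)
    (r : ℕ) (hr : r.Prime) (hrG : r ∣ Nat.card G) (h2r : (2 : ℕ).Coprime r) (h3r : (3 : ℕ).Coprime r)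
    (h5r : (5 : ℕ).Coprime r) :
    (∃ g : G, orderOf g = 2 * r) ∧ (∃ g : G, orderOf g = 3 * r) := by
  have := Fact.mk hr
  have hcard : Nat.card G = 60 * Nat.card π.ker := by
    rw [← Subgroup.card_mul_index π.ker, Subgroup.index_ker, MonoidHom.range_eq_top.2 hπ,
      Subgroup.card_top, a5_card, mul_comm]
  have hk : r ∣ Nat.card π.ker := by
    have h60 : (60 : ℕ).Coprime r := by
      rw [show 60 = 2 * 2 * 3 * 5 from rfl]
      exact ((h2r.mul_left h2r).mul_left h3r).mul_left h5r
    rw [hcard] at hrG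
    exact h60.symm.dvd_of_dvd_mul_left hrG
  obtain ⟨V, hV0, hVp, hVc, hVs⟩ := ker_V π hπ r hk
  let _ : CommGroup V := { (inferInstance : Group V) with
    mul_comm := fun a b => Subtype.ext (hVc a a.2 b b.2) }
  let M := Subgroup.normalizer (V : Set G)
  let π' : M →* alternatingGroup (Fin 5) := π.comp M.subtype
  have hπ' : Function.Surjective π' := fun a => by
    obtain ⟨m, hm, h⟩ := hVs a
    exact ⟨⟨m, hm⟩, h⟩
  have hM : ∀ n, (¬ ∃ g : G, orderOf g = n) → ¬ ∃ g : M, orderOf g = n :=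
    fun n hn ⟨g, hg⟩ => hn ⟨g, by rwa [Subgroup.orderOf_coe]⟩
  let ρ : M →* AddMonoid.End (Additive V) :=
    { toFun := fun m => MonoidHom.toAdditive (V.normalizerMonoidHom m).toMonoidHom
      map_one' := by
        rw [map_one]
        rfl
      map_mul' := fun a b => by
        rw [map_mul]
        rfl }
  have hρ : ∀ (m : M) (v : V), ((ρ m (Additive.ofMul v)).toMul : G) = m * v * (m : G)⁻¹ :=
    fun m v => rfl
  have hfix : ∀ p : ℕ, p.Coprime r → (¬ ∃ g : G, orderOf g = p * r) → ∀ y : M, orderOf y = p →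
      ∀ v : Additive V, ρ y v = v → v = 0 := by
    intro p hp hno y hy v hv
    have h1 := hρ y v.toMul
    rw [ofMul_toMul, hv] at h1
    have := fpf p r hr hp hno V hVp y (by rwa [Subgroup.orderOf_coe]) v.toMul v.toMul.2 h1.symm
    exact congrArg Additive.ofMul (Subtype.ext this : v.toMul = 1)
  have hreg : ∀ (n : ℕ), n.Coprime r → ∀ u : Additive V, n • u = 0 → u = 0 := by
    intro n hn u hu
    have := pgroup_coprime r hr hVp n hn u.toMul (congrArg Additive.toMul hu)
    exact congrArg Additive.ofMul this
  obtain ⟨v, hv, hv1⟩ := Subgroup.ne_bot_iff_exists_ne_one.1 hV0 |>.elim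
    (fun v hv => (⟨v, v.2, fun h => hv (Subtype.ext h)⟩ : ∃ v ∈ V, v ≠ 1))
  have hne : ∀ (n : ℕ), n.Coprime r → (n : AddMonoid.End (Additive V)) ≠ 0 := by
    intro n hn h
    have h1 := hreg n hn (Additive.ofMul ⟨v, hv⟩) (by
      have := DFunLike.congr_fun h (Additive.ofMul (⟨v, hv⟩ : V))
      rwa [AddMonoid.End.natCast_apply] at this)
    exact hv1 (congrArg Subtype.val (congrArg Additive.toMul h1))
  constructor
  · by_contra hno
    refine core2 π' hπ' (hM 6 h6) ρ (by exact_mod_cast hne 2 h2r) ?_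
    intro y hy
    ext1 v
    apply hfix 2 h2r hno y hy
    change ρ y (v + ρ y v) = v + ρ y v
    have h2 : ρ y (ρ y v) = v := by
      have : ρ y * ρ y = 1 := by rw [← map_mul, ← sq, ← hy, pow_orderOf_eq_one, map_one]
      exact DFunLike.congr_fun this v
    rw [map_add, h2, add_comm]
  · by_contra hno
    refine core3 π' hπ' (hM 6 h6) (hM 15 h15) ρ (by exact_mod_cast hne 3 h3r) ?_ ?_
    · intro f hf
      ext1 v
      apply hreg 2 h2r
      have := DFunLike.congr_fun hf v
      rw [two_mul] at this
      rw [two_nsmul]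
      exact this
    · intro y hy
      ext1 v
      apply hfix 3 h3r hno y hy
      rw [sq]
      change ρ y (v + ρ y v + ρ y (ρ y v)) = v + ρ y v + ρ y (ρ y v)
      have h2 : ρ y (ρ y (ρ y v)) = v := by
        have : ρ y * (ρ y * ρ y) = 1 := by
          rw [← map_mul, ← map_mul, ← sq, ← pow_succ', ← map_one ρ]
          congr 1
          rw [← pow_orderOf_eq_one y, hy]
        exact DFunLike.congr_fun this v
      rw [map_add, map_add, h2]
      abel

end Helpers

/-- If `G` is a non-solvable pseudo-solvable group whose prime-graph complement has
the triangle `{2,3,5}`, then for every other prime `r` dividing `|G|`, neither `2 - r`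
nor `3 - r` is an edge of the complement: `G` has elements of orders `2r` and `3r`. -/
theorem two_three_adjacent_to_all_other_primes
    (G : Type*) [Group G] [Finite G] (hG : IsPseudoSolvable G) (hns : ¬ IsSolvable G)
    (h6 : ¬ ∃ g : G, orderOf g = 6)
    (h10 : ¬ ∃ g : G, orderOf g = 10)
    (h15 : ¬ ∃ g : G, orderOf g = 15) :
    ∀ r : ℕ, r.Prime → r ∣ Nat.card G → r ∉ ({2, 3, 5} : Set ℕ) →
      (∃ g : G, orderOf g = 2 * r) ∧ (∃ g : G, orderOf g = 3 * r) := by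
  intro r hr hrG hr5
  obtain ⟨F, hF⟩ := pseudo_surj hG hns h6
  simp only [Set.mem_insert_iff, Set.mem_singleton_iff, not_or] at hr5
  exact final_aux F hF h6 h15 r hr hrG
    ((Nat.coprime_primes Nat.prime_two hr).2 (Ne.symm hr5.1))
    ((Nat.coprime_primes Nat.prime_three hr).2 (Ne.symm hr5.2.1))
    ((Nat.coprime_primes Nat.prime_five hr).2 (Ne.symm hr5.2.2))
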